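/- For each n, let X ~ P_{β_1,Q^{CW}} and Y ~ P_{β_2,Q^{CW}} be independent Ising random vectors on {−1,1}^n with the Curie–Weiss interaction matrix Q^{CW} = (1/n)(11ᵀ − I_n), where β_1, β_2 ≥ 0. Then for every fixed t ∈ R, the moment generating function converges: lim_{n→∞} E[exp(t √n T_n)] = exp( t² (1−m(β_1)²)(1−m(β_2)²) / 2 ). -/

import Mathlib

open MeasureTheory ProbabilityTheory Filter Topology Matrix

noncomputable section

/-- The `±1` configuration associated to a boolean configuration. -/
def pmVec {ι : Type*} (s : ι → Bool) : ι → ℝ := fun i => if s i then 1 else -1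

/-- Unnormalized Ising weight `exp((β/2) zᵀ Q z)`. -/
def isingWeight {ι : Type*} [Fintype ι] (β : ℝ) (Q : Matrix ι ι ℝ) (z : ι → ℝ) : ℝ :=
  Real.exp (β / 2 * (z ⬝ᵥ Q.mulVec z))

/-- Ising partition function `Z(β,Q)`. -/
def isingZ (ι : Type*) [Fintype ι] [DecidableEq ι] (β : ℝ) (Q : Matrix ι ι ℝ) : ℝ :=
  ∑ s : ι → Bool, isingWeight β Q (pmVec s)

/-- The Ising probability measure `P_{β,Q}` on `{±1}^ι ⊆ ℝ^ι`:
`P(z) = exp((β/2) zᵀQz) / Z(β,Q)`. -/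
def isingMeasure (ι : Type*) [Fintype ι] [DecidableEq ι] (β : ℝ) (Q : Matrix ι ι ℝ) :
    Measure (ι → ℝ) :=
  ∑ s : ι → Bool,
    ENNReal.ofReal (isingWeight β Q (pmVec s) / isingZ ι β Q) • Measure.dirac (pmVec s)

/-- Sample mean `X̄ = (1/n) Σ_i X_i`. -/
def sampleMean {ι : Type*} [Fintype ι] (x : ι → ℝ) : ℝ := (∑ i, x i) / (Fintype.card ι : ℝ)

/-- Sample covariance `T_n = (1/n) Σ_i (X_i - X̄)(Y_i - Ȳ)`. -/
def sampleCov {ι : Type*} [Fintype ι] (x y : ι → ℝ) : ℝ :=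
  (∑ i, (x i - sampleMean x) * (y i - sampleMean y)) / (Fintype.card ι : ℝ)

/-- Convergence in distribution: weak convergence of the laws, tested against
bounded continuous functions. -/
def TendstoInDistribution (μ : ℕ → Measure ℝ) (ν : Measure ℝ) : Prop :=
  ∀ f : BoundedContinuousFunction ℝ ℝ,
    Tendsto (fun n => ∫ x, f x ∂(μ n)) atTop (𝓝 (∫ x, f x ∂ν))

/-- The Curie–Weiss interaction matrix `Q^{CW} = (1/n)(11ᵀ - I)`. -/
def QCW (n : ℕ) : Matrix (Fin n) (Fin n) ℝ := fun i j => if i = j then 0 else (n : ℝ)⁻¹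

/-- `m(β)`: equal to `0` for `β ≤ 1`, and to the unique positive root of
`m = tanh(β m)` for `β > 1`. -/
def isingMag (β : ℝ) : ℝ := sSup {m : ℝ | 0 ≤ m ∧ m = Real.tanh (β * m)}

/-!
By the Hubbard–Stratonovich identity, the Curie–Weiss measure at inverse temperature `β` is a
mixture of product measures: given a random field `θ`, the spins are independent with mean `tanh θ`,
and `θ` has density proportional to `exp (n Φ_β(θ))` with `Φ_β(θ) = log cosh θ - θ² / (2β)`. At the
maximisers of `Φ_β` one has `tanh² θ = m(β)²`, so Laplace's method makes `tanh² θ` concentrate at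
`m(β)²`, and `X̄² → m(β₁)²` since the variance of `X̄` given its field is at most `1 / n`.

Given `X` and the field `θ` of `Y`, the exponent `t √n Tₙ = ∑ aᵢ Yᵢ` is linear in independent spins,
with `aᵢ = t (Xᵢ - X̄) / √n`. As `∑ aᵢ = 0` and `∑ aᵢ² = t² (1 - X̄²)`, a second-order expansion of
`log cosh` at `θ` shows that the conditional expectation of `exp (t √n Tₙ)` is
`exp (t² (1 - X̄²) (1 - tanh² θ) / 2)` up to a factor `exp (O(|t|³ / √n))`.
-/

lemma hasDerivAt_tanh (x : ℝ) : HasDerivAt Real.tanh (1 - Real.tanh x ^ 2) x := by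
  have hcosh := (Real.cosh_pos x).ne'
  have hquot := (Real.hasDerivAt_sinh x).div (Real.hasDerivAt_cosh x) hcosh
  rw [show Real.tanh = Real.sinh / Real.cosh from funext Real.tanh_eq_sinh_div_cosh]
  refine hquot.congr_deriv ?_
  simp only [Pi.div_apply]
  field_simp

lemma hasDerivAt_log_cosh (x : ℝ) :
    HasDerivAt (fun y => Real.log (Real.cosh y)) (Real.tanh x) x := by
  simpa only [Real.tanh_eq_sinh_div_cosh] using
    (Real.hasDerivAt_cosh x).log (Real.cosh_pos x).ne'

@[fun_prop]
lemma continuous_tanh : Continuous Real.tanh :=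
  continuous_iff_continuousAt.2 fun x => (hasDerivAt_tanh x).continuousAt

@[fun_prop]
lemma continuous_log_cosh : Continuous fun y => Real.log (Real.cosh y) :=
  continuous_iff_continuousAt.2 fun x => (hasDerivAt_log_cosh x).continuousAt

lemma strictMono_tanh : StrictMono Real.tanh :=
  strictMono_of_hasDerivAt_pos hasDerivAt_tanh fun x => sub_pos.2 (Real.tanh_sq_lt_one x)

lemma strictConcaveOn_tanh_Ici : StrictConcaveOn ℝ (Set.Ici 0) Real.tanh := by
  refine StrictAntiOn.strictConcaveOn_of_deriv (convex_Ici 0) continuous_tanh.continuousOn ?_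
  rw [show deriv Real.tanh = fun x => 1 - Real.tanh x ^ 2 from
    funext fun x => (hasDerivAt_tanh x).deriv, interior_Ici]
  intro a ha b _ hab
  have hpos : 0 < Real.tanh a := Real.tanh_zero ▸ strictMono_tanh ha
  exact sub_lt_sub_left (pow_lt_pow_left₀ (strictMono_tanh hab) hpos.le two_ne_zero) 1

lemma log_cosh_le_abs (x : ℝ) : Real.log (Real.cosh x) ≤ |x| := by
  rw [Real.log_le_iff_le_exp (Real.cosh_pos x), Real.cosh_eq]
  linarith [Real.exp_le_exp.2 (le_abs_self x), Real.exp_le_exp.2 (neg_le_abs x)]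

lemma abs_sq_sub_sq_le {u v s : ℝ} (hu : |u| ≤ 1) (hv : |v| ≤ 1) (hs : 0 < s) :
    |u ^ 2 - v ^ 2| ≤ 1 / s + s * (u - v) ^ 2 := by
  have hsum : |u + v| ≤ 2 := (abs_add_le u v).trans (by linarith)
  have hsquare : 1 / s + s * (u - v) ^ 2 - 2 * |u - v| = (s * |u - v| - 1) ^ 2 / s := by
    rw [← sq_abs (u - v)]
    field_simp
    ring
  calc |u ^ 2 - v ^ 2| = |u + v| * |u - v| := by rw [sq_sub_sq, abs_mul]
    _ ≤ 2 * |u - v| := by gcongr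
    _ ≤ 1 / s + s * (u - v) ^ 2 := by
        rw [← sub_nonneg, hsquare]
        positivity

lemma abs_mul_sub_mul_le {a b c d : ℝ} (hb : |b| ≤ 1) (hc : |c| ≤ 1) :
    |a * b - c * d| ≤ |a - c| + |b - d| :=
  calc |a * b - c * d| = |(a - c) * b + c * (b - d)| := by ring_nf
    _ ≤ |a - c| * |b| + |c| * |b - d| := by
        simpa only [abs_mul] using abs_add_le ((a - c) * b) (c * (b - d))
    _ ≤ |a - c| + |b - d| :=
        add_le_add (mul_le_of_le_one_right (abs_nonneg _) hb)
          (mul_le_of_le_one_left (abs_nonneg _) hc)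

lemma abs_one_sub_mul_one_sub_sub_le {a b c d : ℝ} (hb : b ∈ Set.Icc 0 1) (hc : c ∈ Set.Icc 0 1) :
    |(1 - a) * (1 - b) - (1 - c) * (1 - d)| ≤ |a - c| + |b - d| := by
  have hone_sub {u : ℝ} (hu : u ∈ Set.Icc 0 1) : |1 - u| ≤ 1 :=
    abs_le.2 ⟨by linarith [hu.2], by linarith [hu.1]⟩
  refine (abs_mul_sub_mul_le (hone_sub hb) (hone_sub hc)).trans_eq ?_
  rw [sub_sub_sub_cancel_left, sub_sub_sub_cancel_left, abs_sub_comm c a, abs_sub_comm d b]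

lemma abs_exp_sub_exp_le {K p q : ℝ} (hp : p ≤ K) (hq : q ≤ K) :
    |Real.exp p - Real.exp q| ≤ Real.exp K * |p - q| :=
  (convex_Iic K).norm_image_sub_le_of_norm_hasDerivWithin_le
    (fun x _ => (Real.hasDerivAt_exp x).hasDerivWithinAt)
    (fun x hx => (Real.norm_of_nonneg (Real.exp_pos x).le).trans_le (Real.exp_le_exp.2 hx)) hq hp

lemma abs_exp_sub_exp_mul_le {p v s s' r : ℝ} (hv : 0 ≤ v) (hp : |p - v * s| ≤ r) (hs : s ≤ 1)
    (hs' : s' ≤ 1) :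
    |Real.exp p - Real.exp (v * s')| ≤ Real.exp (v + r) * (r + v * |s - s'|) := by
  have hp_le : p ≤ v + r := by linarith [le_abs_self (p - v * s), mul_le_of_le_one_right hv hs]
  have hs'_le : v * s' ≤ v + r := by
    linarith [(abs_nonneg _).trans hp, mul_le_of_le_one_right hv hs']
  have hdist : |p - v * s'| ≤ r + v * |s - s'| :=
    calc |p - v * s'| ≤ |p - v * s| + |v * s - v * s'| := abs_sub_le _ _ _
      _ ≤ r + v * |s - s'| := by
          rw [← mul_sub, abs_mul, abs_of_nonneg hv]
          gcongr
  exact (abs_exp_sub_exp_le hp_le hs'_le).trans (by gcongr)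

lemma abs_le_mul_abs_pow_succ_of_hasDerivAt {f f' : ℝ → ℝ} (hf : ∀ x, HasDerivAt f (f' x) x)
    (hf0 : f 0 = 0) {C : ℝ} {k : ℕ} (hf' : ∀ x, |f' x| ≤ C * |x| ^ k) (x : ℝ) :
    |f x| ≤ C * |x| ^ (k + 1) := by
  have hC : 0 ≤ C := by simpa using (abs_nonneg _).trans (hf' 1)
  have hbound : ∀ y ∈ Set.uIcc 0 x, ‖f' y‖ ≤ C * |x| ^ k := fun y hy => by
    have hyx : |y| ≤ |x| := by simpa using Set.abs_sub_left_of_mem_uIcc hy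
    exact (hf' y).trans (by gcongr)
  have hmvt := (convex_uIcc 0 x).norm_image_sub_le_of_norm_hasDerivWithin_le
    (fun y _ => (hf y).hasDerivWithinAt) hbound Set.left_mem_uIcc Set.right_mem_uIcc
  simpa only [hf0, sub_zero, Real.norm_eq_abs, pow_succ, mul_assoc] using hmvt

lemma abs_log_cosh_add_sub_taylor_le (θ d : ℝ) :
    |Real.log (Real.cosh (θ + d)) - Real.log (Real.cosh θ) - Real.tanh θ * d
      - (1 - Real.tanh θ ^ 2) * (d ^ 2 / 2)| ≤ 2 * |d| ^ 3 := by
  have hasDerivAt_tanh_add (x : ℝ) :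
      HasDerivAt (fun d => Real.tanh (θ + d)) (1 - Real.tanh (θ + x) ^ 2) x :=
    (hasDerivAt_tanh (θ + x)).comp_const_add θ x
  have hasDerivAt_log_cosh_add (x : ℝ) :
      HasDerivAt (fun d => Real.log (Real.cosh (θ + d))) (Real.tanh (θ + x)) x :=
    (hasDerivAt_log_cosh (θ + x)).comp_const_add θ x
  have third_deriv_le (x : ℝ) :
      |-(2 * Real.tanh (θ + x) * (1 - Real.tanh (θ + x) ^ 2))| ≤ 2 * |x| ^ 0 := by
    have hτ := (Real.abs_tanh_lt_one (θ + x)).le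
    have hsech : |1 - Real.tanh (θ + x) ^ 2| ≤ 1 := by
      rw [abs_of_pos (sub_pos.2 (Real.tanh_sq_lt_one _))]
      exact sub_le_self 1 (sq_nonneg _)
    rw [abs_neg, abs_mul, abs_mul, abs_two, pow_zero, mul_assoc]
    exact mul_le_mul_of_nonneg_left (mul_le_one₀ hτ (abs_nonneg _) hsech) zero_le_two
  have second_order (x : ℝ) :
      |(1 - Real.tanh (θ + x) ^ 2) - (1 - Real.tanh θ ^ 2)| ≤ 2 * |x| ^ 1 :=
    abs_le_mul_abs_pow_succ_of_hasDerivAt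
      (f := fun x => (1 - Real.tanh (θ + x) ^ 2) - (1 - Real.tanh θ ^ 2))
      (fun x => ((((hasDerivAt_tanh_add x).pow 2).const_sub 1).sub_const _).congr_deriv (by simp))
      (by simp) third_deriv_le x
  have first_order (x : ℝ) :
      |Real.tanh (θ + x) - Real.tanh θ - (1 - Real.tanh θ ^ 2) * x| ≤ 2 * |x| ^ 2 :=
    abs_le_mul_abs_pow_succ_of_hasDerivAt
      (f := fun x => Real.tanh (θ + x) - Real.tanh θ - (1 - Real.tanh θ ^ 2) * x)
      (fun x => (((hasDerivAt_tanh_add x).sub_const _).sub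
        ((hasDerivAt_id x).const_mul _)).congr_deriv (by simp))
      (by simp) second_order x
  exact abs_le_mul_abs_pow_succ_of_hasDerivAt
    (f := fun d => Real.log (Real.cosh (θ + d)) - Real.log (Real.cosh θ) - Real.tanh θ * d
      - (1 - Real.tanh θ ^ 2) * (d ^ 2 / 2))
    (fun x => ((((hasDerivAt_log_cosh_add x).sub_const _).sub
      ((hasDerivAt_id x).const_mul _)).sub
      ((((hasDerivAt_id x).pow 2).div_const 2).const_mul _)).congr_deriv (by simp))
    (by simp) first_order d

lemma gaussianReal_eq_tilted (μ : ℝ) {v : NNReal} (hv : v ≠ 0) :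
    gaussianReal μ v = (volume : Measure ℝ).tilted (fun x => -(x - μ) ^ 2 / (2 * v)) := by
  have hconst : √(2 * Real.pi * v) ≠ 0 := by positivity
  have hint : ∫ x, Real.exp (-(x - μ) ^ 2 / (2 * v)) = √(2 * Real.pi * v) := by
    have hone := integral_gaussianPDFReal_eq_one μ hv
    simp only [gaussianPDFReal, integral_const_mul] at hone
    field_simp at hone
    simpa only [neg_div] using hone
  rw [gaussianReal_of_var_ne_zero μ hv, Measure.tilted, hint]
  congr 1
  funext x
  simp only [gaussianPDF, gaussianPDFReal]
  rw [inv_mul_eq_div]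

section Tilted

variable {α : Type*} [MeasurableSpace α]

lemma measureReal_tilted_le {μ : Measure α} [IsFiniteMeasure μ] {g : α → ℝ}
    (hg : Integrable (fun x => Real.exp (g x)) μ) {A V : Set α} (hA : MeasurableSet A)
    (hV : MeasurableSet V) (hμV : μ V ≠ 0) {a b : ℝ} (hgA : ∀ x ∈ A, g x ≤ a)
    (hgV : ∀ x ∈ V, b ≤ g x) :
    (μ.tilted g).real A ≤ Real.exp (a - b) * (μ.real A / μ.real V) := by
  have hV_pos : 0 < μ.real V := ENNReal.toReal_pos hμV (measure_ne_top μ V)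
  have hnum : ∫ x in A, Real.exp (g x) ∂μ ≤ Real.exp a * μ.real A := by
    refine (setIntegral_mono_on hg.integrableOn (integrable_const _).integrableOn hA
      fun x hx => Real.exp_le_exp.2 (hgA x hx)).trans_eq ?_
    rw [setIntegral_const, smul_eq_mul, mul_comm]
  have hden : Real.exp b * μ.real V ≤ ∫ x, Real.exp (g x) ∂μ := by
    calc Real.exp b * μ.real V = ∫ _ in V, Real.exp b ∂μ := by
          rw [setIntegral_const, smul_eq_mul, mul_comm]
      _ ≤ ∫ x in V, Real.exp (g x) ∂μ :=
          setIntegral_mono_on (integrable_const _).integrableOn hg.integrableOn hV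
            fun x hx => Real.exp_le_exp.2 (hgV x hx)
      _ ≤ ∫ x, Real.exp (g x) ∂μ :=
          setIntegral_le_integral hg (ae_of_all _ fun x => (Real.exp_pos _).le)
  have hnonneg : 0 ≤ ∫ x in A, Real.exp (g x) / ∫ y, Real.exp (g y) ∂μ ∂μ :=
    integral_nonneg fun x => div_nonneg (Real.exp_pos _).le
      (integral_nonneg fun y => (Real.exp_pos _).le)
  rw [measureReal_def, tilted_apply_eq_ofReal_integral, ENNReal.toReal_ofReal hnonneg,
    integral_div, Real.exp_sub, div_mul_div_comm]
  gcongr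

lemma tendsto_measureReal_tilted_nat_mul {μ : Measure α} [IsFiniteMeasure μ] {g : α → ℝ}
    (hg : Measurable g) {M δ : ℝ} (hgM : ∀ x, g x ≤ M) (hδ : 0 < δ)
    (hM : μ {x | M - δ / 2 < g x} ≠ 0) {A : Set α} (hA : MeasurableSet A)
    (hgA : ∀ x ∈ A, g x ≤ M - δ) :
    Tendsto (fun n : ℕ => (μ.tilted (fun x => n * g x)).real A) atTop (𝓝 0) := by
  set V := {x | M - δ / 2 < g x}
  have hint (n : ℕ) : Integrable (fun x => Real.exp (n * g x)) μ :=
    Integrable.of_bound (by fun_prop) (Real.exp (n * M)) <| ae_of_all _ fun x => by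
      rw [Real.norm_of_nonneg (Real.exp_pos _).le]
      have := hgM x
      gcongr
  have hbound (n : ℕ) : (μ.tilted (fun x => n * g x)).real A
      ≤ Real.exp (-(δ / 2)) ^ n * (μ.real A / μ.real V) := by
    refine (measureReal_tilted_le (hint n) hA (measurableSet_lt measurable_const hg) hM
      (a := n * (M - δ)) (b := n * (M - δ / 2)) (fun x hx => ?_) (fun x hx => ?_)).trans_eq ?_
    · have := hgA x hx
      gcongr
    · have : M - δ / 2 < g x := hx
      gcongr
    · rw [← Real.exp_nat_mul]
      congr 2
      ring
  have hrate : Real.exp (-(δ / 2)) < 1 := Real.exp_lt_one_iff.2 (by linarith)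
  refine squeeze_zero (fun _ => measureReal_nonneg) hbound ?_
  simpa using (tendsto_pow_atTop_nhds_zero_of_lt_one (Real.exp_pos _).le hrate).mul_const
    (μ.real A / μ.real V)

end Tilted

section Expectation

variable {α : Type*} [MeasurableSpace α]

lemma tendsto_integral_zero_of_tendsto_measureReal {κ : Type*} {l : Filter κ}
    {μ : κ → Measure α} [∀ n, IsProbabilityMeasure (μ n)] {h : α → ℝ} (hh : Measurable h)
    (h_nonneg : ∀ x, 0 ≤ h x) (h_le_one : ∀ x, h x ≤ 1)
    (hμ : ∀ ε > 0, Tendsto (fun n => (μ n).real {x | ε ≤ h x}) l (𝓝 0)) :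
    Tendsto (fun n => ∫ x, h x ∂μ n) l (𝓝 0) := by
  have hbound {ε : ℝ} (hε : 0 ≤ ε) (n : κ) : ∫ x, h x ∂μ n ≤ ε + (μ n).real {x | ε ≤ h x} := by
    have hmeas : MeasurableSet {x | ε ≤ h x} := measurableSet_le measurable_const hh
    have hind : Integrable ({x | ε ≤ h x}.indicator 1 : α → ℝ) (μ n) :=
      (integrable_const (1 : ℝ)).indicator hmeas
    have hpoint (x : α) : h x ≤ ε + {x | ε ≤ h x}.indicator 1 x := by
      by_cases hx : ε ≤ h x
      · rw [Set.indicator_of_mem (show x ∈ {x | ε ≤ h x} from hx), Pi.one_apply]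
        linarith [h_le_one x, h_nonneg x]
      · rw [Set.indicator_of_notMem (show x ∉ {x | ε ≤ h x} from hx)]
        linarith
    calc ∫ x, h x ∂μ n ≤ ∫ x, ε + {x | ε ≤ h x}.indicator 1 x ∂μ n :=
          integral_mono_of_nonneg (ae_of_all _ h_nonneg) ((integrable_const ε).add hind)
            (ae_of_all _ hpoint)
      _ = ε + (μ n).real {x | ε ≤ h x} := by
          rw [integral_add (integrable_const ε) hind, integral_indicator_one hmeas]
          simp
  refine tendsto_order.2 ⟨fun a ha => Eventually.of_forall fun n =>
    ha.trans_le (integral_nonneg h_nonneg), fun ε hε => ?_⟩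
  filter_upwards [(hμ (ε / 2) (half_pos hε)).eventually_lt_const (half_pos hε)] with n hn
  linarith [hbound (half_pos hε).le n]

lemma abs_integral_sub_le {μ : Measure α} [IsProbabilityMeasure μ] {f g : α → ℝ} {c : ℝ}
    (hf : AEStronglyMeasurable f μ) (hg : Integrable g μ) (hfg : ∀ᵐ x ∂μ, |f x - c| ≤ g x) :
    |(∫ x, f x ∂μ) - c| ≤ ∫ x, g x ∂μ := by
  have hf_int : Integrable f μ := by
    simpa using (hg.mono' (hf.sub aestronglyMeasurable_const) hfg).add (integrable_const c)
  calc |(∫ x, f x ∂μ) - c| = ‖∫ x, f x - c ∂μ‖ := by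
        rw [integral_sub hf_int (integrable_const c)]
        simp
    _ ≤ ∫ x, g x ∂μ := norm_integral_le_of_norm_le hg hfg

end Expectation

section IsingMeasure

variable {ι : Type*}

lemma pmVec_sq (s : ι → Bool) (i : ι) : pmVec s i ^ 2 = 1 := by
  unfold pmVec
  split_ifs <;> norm_num

variable [Fintype ι] [DecidableEq ι] (β : ℝ) (Q : Matrix ι ι ℝ)

lemma isingZ_pos : 0 < isingZ ι β Q :=
  Finset.sum_pos (fun _ _ => Real.exp_pos _) Finset.univ_nonempty

lemma isingWeight_div_isingZ_nonneg (z : ι → ℝ) : 0 ≤ isingWeight β Q z / isingZ ι β Q :=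
  div_nonneg (Real.exp_pos _).le (isingZ_pos β Q).le

instance isProbabilityMeasure_isingMeasure : IsProbabilityMeasure (isingMeasure ι β Q) := by
  refine ⟨?_⟩
  simp only [isingMeasure, Measure.finsetSum_apply, Measure.smul_apply, measure_univ, smul_eq_mul,
    mul_one]
  rw [← ENNReal.ofReal_sum_of_nonneg fun s _ => isingWeight_div_isingZ_nonneg β Q (pmVec s),
    ← Finset.sum_div, ← isingZ, div_self (isingZ_pos β Q).ne', ENNReal.ofReal_one]

lemma integrable_isingMeasure (f : (ι → ℝ) → ℝ) : Integrable f (isingMeasure ι β Q) :=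
  integrable_finsetSum_measure.2 fun _ _ =>
    (integrable_dirac enorm_lt_top).smul_measure ENNReal.ofReal_ne_top

lemma integral_isingMeasure (f : (ι → ℝ) → ℝ) :
    ∫ z, f z ∂isingMeasure ι β Q
      = (∑ s, isingWeight β Q (pmVec s) * f (pmVec s)) / isingZ ι β Q := by
  rw [isingMeasure, integral_finsetSum_measure fun _ _ =>
    (integrable_dirac enorm_lt_top).smul_measure ENNReal.ofReal_ne_top, Finset.sum_div]
  refine Finset.sum_congr rfl fun s _ => ?_
  rw [integral_smul_measure, integral_dirac,
    ENNReal.toReal_ofReal (isingWeight_div_isingZ_nonneg β Q (pmVec s)), smul_eq_mul,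
    div_mul_eq_mul_div]

lemma ae_isingMeasure_sq_eq_one : ∀ᵐ z ∂isingMeasure ι β Q, ∀ i, z i ^ 2 = 1 := by
  rw [isingMeasure, ae_finsetSum_measure_iff]
  refine fun s _ => Measure.ae_smul_measure ?_ _
  rw [ae_dirac_eq]
  exact pmVec_sq s

lemma integral_prod_isingMeasure {κ : Type*} [Fintype κ] [DecidableEq κ] (β' : ℝ)
    (Q' : Matrix κ κ ℝ) {f : (ι → ℝ) × (κ → ℝ) → ℝ} (hf : Measurable f) :
    ∫ p, f p ∂((isingMeasure ι β Q).prod (isingMeasure κ β' Q'))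
      = ∫ x, (∫ y, f (x, y) ∂isingMeasure κ β' Q') ∂isingMeasure ι β Q :=
  integral_prod f <| (integrable_prod_iff hf.aestronglyMeasurable).2
    ⟨ae_of_all _ fun _ => integrable_isingMeasure β' Q' _, integrable_isingMeasure β Q _⟩

end IsingMeasure

section ProductSpins

variable (ι : Type*) [Fintype ι] [DecidableEq ι]

/-- The uniform distribution on `{±1}^ι`, encoded as the Ising measure without interaction. -/
def uniformSpin : Measure (ι → ℝ) := isingMeasure ι 0 0

/-- The law of independent spins in a constant external field `θ`: each spin has mean
`tanh θ`. -/
def spinMeasure (θ : ℝ) : Measure (ι → ℝ) := (uniformSpin ι).tilted fun z => θ * ∑ i, z i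

variable {ι}

instance : IsProbabilityMeasure (uniformSpin ι) := by
  unfold uniformSpin
  infer_instance

lemma integrable_uniformSpin (f : (ι → ℝ) → ℝ) : Integrable f (uniformSpin ι) :=
  integrable_isingMeasure 0 0 f

lemma integral_uniformSpin (f : (ι → ℝ) → ℝ) :
    ∫ z, f z ∂uniformSpin ι = (∑ s, f (pmVec s)) / 2 ^ Fintype.card ι := by
  rw [uniformSpin, integral_isingMeasure]
  simp [isingZ, isingWeight]

lemma integral_isingMeasure_eq_div_uniformSpin (β : ℝ) (Q : Matrix ι ι ℝ) (f : (ι → ℝ) → ℝ) :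
    ∫ z, f z ∂isingMeasure ι β Q = (∫ z, isingWeight β Q z * f z ∂uniformSpin ι) /
      ∫ z, isingWeight β Q z ∂uniformSpin ι := by
  rw [integral_isingMeasure, integral_uniformSpin, integral_uniformSpin, ← isingZ,
    div_div_div_cancel_right₀ (by positivity)]

lemma integral_exp_sum_uniformSpin (a : ι → ℝ) :
    ∫ z, Real.exp (∑ i, a i * z i) ∂uniformSpin ι = ∏ i, Real.cosh (a i) := by
  have hcosh (i : ι) :
      Real.cosh (a i) = (∑ b : Bool, Real.exp (a i * if b then 1 else -1)) / 2 := by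
    simp [Real.cosh_eq]
  simp only [integral_uniformSpin, hcosh, Finset.prod_div_distrib, Fintype.prod_sum,
    Finset.prod_const, Finset.card_univ, Real.exp_sum, pmVec]

lemma mgf_sum_uniformSpin (θ : ℝ) :
    mgf (fun z => ∑ i, z i) (uniformSpin ι) θ = Real.cosh θ ^ Fintype.card ι := by
  simpa only [mgf, Finset.mul_sum, Finset.prod_const, Finset.card_univ] using
    integral_exp_sum_uniformSpin fun _ : ι => θ

lemma cgf_sum_uniformSpin :
    cgf (fun z => ∑ i, z i) (uniformSpin ι)
      = fun θ => Fintype.card ι * Real.log (Real.cosh θ) := by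
  funext θ
  rw [cgf, mgf_sum_uniformSpin, Real.log_pow]

instance (θ : ℝ) : IsProbabilityMeasure (spinMeasure ι θ) :=
  isProbabilityMeasure_tilted (integrable_uniformSpin _)

lemma integrable_spinMeasure (θ : ℝ) (f : (ι → ℝ) → ℝ) : Integrable f (spinMeasure ι θ) :=
  (integrable_tilted_iff (integrable_uniformSpin _) f).2 (integrable_uniformSpin _)

lemma integral_spinMeasure (θ : ℝ) (f : (ι → ℝ) → ℝ) :
    ∫ z, f z ∂spinMeasure ι θ
      = (∫ z, Real.exp (θ * ∑ i, z i) * f z ∂uniformSpin ι) / Real.cosh θ ^ Fintype.card ι := by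
  rw [spinMeasure, integral_tilted_mul_eq_mgf, mgf_sum_uniformSpin, ← integral_div]
  simp only [smul_eq_mul, div_mul_eq_mul_div]

lemma integral_exp_sum_spinMeasure (θ : ℝ) (a : ι → ℝ) :
    ∫ z, Real.exp (∑ i, a i * z i) ∂spinMeasure ι θ
      = Real.exp (∑ i, (Real.log (Real.cosh (θ + a i)) - Real.log (Real.cosh θ))) := by
  simp only [integral_spinMeasure, ← Real.exp_add, Finset.mul_sum, ← Finset.sum_add_distrib,
    ← add_mul]
  rw [integral_exp_sum_uniformSpin, Real.exp_sum]
  simp only [Real.exp_sub, Real.exp_log (Real.cosh_pos _), Finset.prod_div_distrib,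
    Finset.prod_const, Finset.card_univ]

lemma continuous_integral_spinMeasure (f : (ι → ℝ) → ℝ) :
    Continuous fun θ => ∫ z, f z ∂spinMeasure ι θ := by
  simp only [integral_spinMeasure, integral_uniformSpin]
  fun_prop (disch := exact fun θ => by positivity)

lemma mem_interior_integrableExpSet_uniformSpin (X : (ι → ℝ) → ℝ) (θ : ℝ) :
    θ ∈ interior (integrableExpSet X (uniformSpin ι)) := by
  have huniv : integrableExpSet X (uniformSpin ι) = Set.univ :=
    Set.eq_univ_of_forall fun _ => integrable_uniformSpin _
  simp only [huniv, interior_univ, Set.mem_univ]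

lemma integral_sum_spinMeasure (θ : ℝ) :
    ∫ z, ∑ i, z i ∂spinMeasure ι θ = Fintype.card ι * Real.tanh θ := by
  rw [spinMeasure, integral_tilted_mul_self (mem_interior_integrableExpSet_uniformSpin _ θ),
    cgf_sum_uniformSpin]
  exact ((hasDerivAt_log_cosh θ).const_mul _).deriv

lemma variance_sum_spinMeasure (θ : ℝ) :
    Var[fun z => ∑ i, z i; spinMeasure ι θ] = Fintype.card ι * (1 - Real.tanh θ ^ 2) := by
  rw [spinMeasure, variance_tilted_mul (mem_interior_integrableExpSet_uniformSpin _ θ),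
    cgf_sum_uniformSpin, iteratedDeriv_succ, iteratedDeriv_one,
    funext fun x => ((hasDerivAt_log_cosh x).const_mul (Fintype.card ι : ℝ)).deriv]
  exact ((hasDerivAt_tanh θ).const_mul _).deriv

lemma integral_sampleMean_sub_tanh_sq [Nonempty ι] (θ : ℝ) :
    ∫ z, (sampleMean z - Real.tanh θ) ^ 2 ∂spinMeasure ι θ
      = (1 - Real.tanh θ ^ 2) / Fintype.card ι := by
  have hvar := variance_sum_spinMeasure (ι := ι) θ
  rw [variance_eq_integral (by fun_prop), integral_sum_spinMeasure] at hvar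
  have hscale (z : ι → ℝ) : (sampleMean z - Real.tanh θ) ^ 2
      = (∑ i, z i - Fintype.card ι * Real.tanh θ) ^ 2 / (Fintype.card ι : ℝ) ^ 2 := by
    rw [sampleMean]
    field_simp
  simp only [hscale]
  rw [integral_div, hvar]
  field_simp

end ProductSpins

section SampleMean

variable {ι : Type*} [Fintype ι]

lemma abs_sampleMean_le_one {z : ι → ℝ} (hz : ∀ i, z i ^ 2 = 1) : |sampleMean z| ≤ 1 := by
  rw [sampleMean, abs_div, Nat.abs_cast]
  refine div_le_one_of_le₀ ((Finset.abs_sum_le_sum_abs _ _).trans ?_) (Nat.cast_nonneg _)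
  simpa using Finset.sum_le_card_nsmul Finset.univ (fun i => |z i|) 1 fun i _ =>
    (sq_le_one_iff_abs_le_one _).1 (hz i).le

variable [DecidableEq ι]

lemma ae_spinMeasure_sq_eq_one (θ : ℝ) : ∀ᵐ z ∂spinMeasure ι θ, ∀ i, z i ^ 2 = 1 :=
  (tilted_absolutelyContinuous _ _).ae_le (ae_isingMeasure_sq_eq_one 0 0)

lemma integral_abs_sampleMean_sq_sub_tanh_sq_le [Nonempty ι] (θ : ℝ) :
    ∫ z, |sampleMean z ^ 2 - Real.tanh θ ^ 2| ∂spinMeasure ι θ ≤ 2 / √(Fintype.card ι) := by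
  set n := (Fintype.card ι : ℝ)
  have hn : 0 < √n := Real.sqrt_pos.2 (Nat.cast_pos.2 Fintype.card_pos)
  calc ∫ z, |sampleMean z ^ 2 - Real.tanh θ ^ 2| ∂spinMeasure ι θ
      ≤ ∫ z, 1 / √n + √n * (sampleMean z - Real.tanh θ) ^ 2 ∂spinMeasure ι θ := by
        refine integral_mono_ae (integrable_spinMeasure _ _) (integrable_spinMeasure _ _) ?_
        filter_upwards [ae_spinMeasure_sq_eq_one θ] with z hz
        exact abs_sq_sub_sq_le (abs_sampleMean_le_one hz) (Real.abs_tanh_lt_one θ).le hn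
    _ = 1 / √n + √n * ((1 - Real.tanh θ ^ 2) / n) := by
        rw [integral_add (integrable_const _) (integrable_spinMeasure _ _), integral_const_mul,
          integral_sampleMean_sub_tanh_sq, integral_const, probReal_univ, one_smul]
    _ ≤ 1 / √n + √n * (1 / n) := by
        gcongr
        exact sub_le_self 1 (sq_nonneg _)
    _ = 2 / √n := by
        rw [mul_one_div, Real.sqrt_div_self']
        ring

end SampleMean

lemma isingMag_zero : isingMag 0 = 0 := by
  have hset : {m : ℝ | 0 ≤ m ∧ m = Real.tanh (0 * m)} = {0} := by
    ext m
    simpa using fun h : m = 0 => h.ge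
  rw [isingMag, hset, csSup_singleton]

lemma isingMag_sq_mem_Icc (β : ℝ) : isingMag β ^ 2 ∈ Set.Icc 0 1 := by
  have hnonneg : 0 ≤ isingMag β := Real.sSup_nonneg fun m hm => hm.1
  have hle : isingMag β ≤ 1 :=
    Real.sSup_le (fun m hm => hm.2.trans_le (Real.tanh_lt_one _).le) zero_le_one
  exact ⟨sq_nonneg _, pow_le_one₀ hnonneg hle⟩

/-- The Curie–Weiss free energy `Φ_β(θ) = log cosh θ - θ² / (2β)`, as a function of the field `θ`
acting on each spin: the law of the mixing field of `n` spins has density proportional to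
`exp (n Φ_β)`. -/
def cwFreeEnergy (β θ : ℝ) : ℝ := Real.log (Real.cosh θ) - θ ^ 2 / (2 * β)

namespace cwFreeEnergy

lemma neg (β θ : ℝ) : cwFreeEnergy β (-θ) = cwFreeEnergy β θ := by
  simp only [cwFreeEnergy, Real.cosh_neg, neg_sq]

@[fun_prop]
lemma continuous (β : ℝ) : Continuous (cwFreeEnergy β) := by
  unfold cwFreeEnergy
  fun_prop

lemma hasDerivAt (β θ : ℝ) : HasDerivAt (cwFreeEnergy β) (Real.tanh θ - θ / β) θ := by
  refine ((hasDerivAt_log_cosh θ).sub (((hasDerivAt_id θ).pow 2).div_const (2 * β))).congr_deriv ?_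
  simp only [id, Nat.cast_ofNat, Nat.add_one_sub_one, pow_one, mul_one]
  rw [mul_div_mul_left θ β two_ne_zero]

lemma le_sub_sq {β : ℝ} (hβ : 0 < β) (θ : ℝ) : cwFreeEnergy β θ ≤ β - θ ^ 2 / (4 * β) := by
  have hsq : β - θ ^ 2 / (4 * β) - (|θ| - θ ^ 2 / (2 * β)) = (|θ| - 2 * β) ^ 2 / (4 * β) := by
    rw [← sq_abs θ]
    field_simp
    ring
  have hsq_nonneg : 0 ≤ (|θ| - 2 * β) ^ 2 / (4 * β) := by positivity
  rw [cwFreeEnergy]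
  linarith [log_cosh_le_abs θ]

lemma tendsto_cocompact_atBot {β : ℝ} (hβ : 0 < β) :
    Tendsto (cwFreeEnergy β) (cocompact ℝ) atBot := by
  have hsq : Tendsto (fun θ : ℝ => θ ^ 2 / (4 * β)) (cocompact ℝ) atTop := by
    refine Tendsto.atTop_div_const (by positivity) ?_
    simpa only [Function.comp_def, Real.norm_eq_abs, sq_abs] using
      (tendsto_pow_atTop two_ne_zero).comp (tendsto_norm_cocompact_atTop (E := ℝ))
  refine tendsto_atBot_mono (le_sub_sq hβ) ?_
  simpa only [sub_eq_add_neg, Function.comp_apply] using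
    tendsto_atBot_add_const_left _ β (tendsto_neg_atTop_atBot.comp hsq)

lemma div_lt_tanh {β m θ : ℝ} (hβ : 0 < β) (hm : m = Real.tanh (β * m)) (hθ : 0 < θ)
    (hθm : θ < β * m) : θ / β < Real.tanh θ := by
  have hβm : 0 < β * m := hθ.trans hθm
  have hm_ne : m ≠ 0 := right_ne_zero_of_mul hβm.ne'
  have hconc := strictConcaveOn_tanh_Ici.2 Set.self_mem_Ici hβm.le hβm.ne
    (sub_pos.2 ((div_lt_one hβm).2 hθm)) (div_pos hθ hβm) (sub_add_cancel 1 (θ / (β * m)))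
  have hchord : θ / (β * m) * m = θ / β := by field_simp
  simpa only [smul_eq_mul, Real.tanh_zero, mul_zero, zero_add, ← hm, hchord,
    div_mul_cancel₀ θ hβm.ne'] using hconc

lemma strictMonoOn_Icc {β m : ℝ} (hβ : 0 < β) (hm : m = Real.tanh (β * m)) :
    StrictMonoOn (cwFreeEnergy β) (Set.Icc 0 (β * m)) := by
  refine strictMonoOn_of_deriv_pos (convex_Icc _ _) (continuous β).continuousOn fun θ hθ => ?_
  rw [interior_Icc] at hθ
  rw [(hasDerivAt β θ).deriv]
  exact sub_pos.2 (div_lt_tanh hβ hm hθ.1 hθ.2)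

lemma tanh_eq_isingMag_of_forall_le {β : ℝ} (hβ : 0 < β) {θ : ℝ} (hθ : 0 ≤ θ)
    (hmax : ∀ x, cwFreeEnergy β x ≤ cwFreeEnergy β θ) : Real.tanh θ = isingMag β := by
  have htanh : Real.tanh θ = θ / β := sub_eq_zero.1 <|
    IsLocalMax.hasDerivAt_eq_zero (Eventually.of_forall hmax) (hasDerivAt β θ)
  have hfixed : θ / β = Real.tanh (β * (θ / β)) := by rw [mul_div_cancel₀ _ hβ.ne', htanh]
  have hgreatest : IsGreatest {m : ℝ | 0 ≤ m ∧ m = Real.tanh (β * m)} (θ / β) := by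
    refine ⟨⟨by positivity, hfixed⟩, fun m hm => ?_⟩
    by_contra! hlt
    rw [div_lt_iff₀' hβ] at hlt
    exact (hmax (β * m)).not_gt <|
      strictMonoOn_Icc hβ hm.2 ⟨hθ, hlt.le⟩ ⟨hθ.trans hlt.le, le_rfl⟩ hlt
  rw [htanh, isingMag, hgreatest.csSup_eq]

lemma tanh_sq_eq_isingMag_sq_of_forall_le {β : ℝ} (hβ : 0 < β) {θ : ℝ}
    (hmax : ∀ x, cwFreeEnergy β x ≤ cwFreeEnergy β θ) : Real.tanh θ ^ 2 = isingMag β ^ 2 := by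
  rcases le_total 0 θ with hθ | hθ
  · rw [tanh_eq_isingMag_of_forall_le hβ hθ hmax]
  · have hneg := tanh_eq_isingMag_of_forall_le hβ (neg_nonneg.2 hθ) fun x => by
      rw [neg]
      exact hmax x
    rw [← hneg, Real.tanh_neg, neg_sq]

lemma exists_forall_le_sub {β : ℝ} (hβ : 0 < β) {θ₀ : ℝ}
    (hmax : ∀ θ, cwFreeEnergy β θ ≤ cwFreeEnergy β θ₀) {ε : ℝ} (hε : 0 < ε) :
    ∃ δ > 0, ∀ θ ∈ {θ | ε ≤ |Real.tanh θ ^ 2 - isingMag β ^ 2|},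
      cwFreeEnergy β θ ≤ cwFreeEnergy β θ₀ - δ := by
  set A : Set ℝ := {θ | ε ≤ |Real.tanh θ ^ 2 - isingMag β ^ 2|} with hA
  have hA_closed : IsClosed A := isClosed_le continuous_const (by fun_prop)
  rcases A.eq_empty_or_nonempty with hempty | ⟨a, ha⟩
  · exact ⟨1, one_pos, by simp [hempty]⟩
  obtain ⟨b, hb, hb_max⟩ := (continuous β).continuousOn.exists_isMaxOn' hA_closed ha
    (((tendsto_cocompact_atBot hβ).eventually_le_atBot _).filter_mono inf_le_left)
  have hb_lt : cwFreeEnergy β b < cwFreeEnergy β θ₀ := by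
    refine (hmax b).lt_of_ne fun heq => ?_
    have hb_mag := tanh_sq_eq_isingMag_sq_of_forall_le hβ fun x => (hmax x).trans_eq heq.symm
    rw [hA, Set.mem_ofPred_eq, hb_mag, sub_self, abs_zero] at hb
    exact hb.not_gt hε
  exact ⟨_, sub_pos.2 hb_lt, fun θ hθ => (hb_max hθ).trans_eq (by ring)⟩

end cwFreeEnergy

section CurieWeiss

variable {β : ℝ} {n : ℕ}

lemma dotProduct_QCW_mulVec (z : Fin n → ℝ) :
    z ⬝ᵥ QCW n *ᵥ z = ((∑ i, z i) ^ 2 - ∑ i, z i ^ 2) / n := by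
  have hentry (i j : Fin n) : QCW n i j * z j = (z j - if i = j then z j else 0) / n := by
    unfold QCW
    split_ifs <;> simp [div_eq_inv_mul]
  have hrow (i : Fin n) : (QCW n *ᵥ z) i = (∑ j, z j - z i) / n := by
    simp [mulVec, dotProduct, hentry, ← Finset.sum_div]
  simp only [dotProduct, hrow, mul_div_assoc', mul_sub]
  rw [← Finset.sum_div, Finset.sum_sub_distrib, ← Finset.sum_mul]
  simp only [sq]

lemma integral_exp_mul_const_gaussianReal (v : NNReal) (a : ℝ) :
    ∫ θ, Real.exp (θ * a) ∂gaussianReal 0 v = Real.exp (v * a ^ 2 / 2) := by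
  simpa [mgf, mul_comm] using
    mgf_gaussianReal (p := gaussianReal 0 v) (X := id) (μ := 0) (v := v) (by simp) a

lemma integrable_exp_mul_const_gaussianReal (v : NNReal) (a : ℝ) :
    Integrable (fun θ => Real.exp (θ * a)) (gaussianReal 0 v) := by
  simpa [mul_comm] using integrable_exp_mul_gaussianReal (μ := 0) (v := v) a

-- Hubbard–Stratonovich; the factor `n / n` is the diagonal of `Q`, absent when `n = 0`.
lemma isingWeight_QCW (hβ : 0 ≤ β) {z : Fin n → ℝ} (hz : ∀ i, z i ^ 2 = 1) :
    isingWeight β (QCW n) z = Real.exp (-(β / 2 * (n / n))) *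
      ∫ θ, Real.exp (θ * ∑ i, z i) ∂gaussianReal 0 (β / n).toNNReal := by
  rw [integral_exp_mul_const_gaussianReal, Real.coe_toNNReal _ (by positivity), isingWeight,
    dotProduct_QCW_mulVec, ← Real.exp_add]
  simp only [hz, Finset.sum_const, Finset.card_univ, Fintype.card_fin, nsmul_eq_mul, mul_one]
  congr 1
  ring

lemma exp_nat_mul_log_cosh (θ : ℝ) : Real.exp (n * Real.log (Real.cosh θ)) = Real.cosh θ ^ n := by
  rw [Real.exp_nat_mul, Real.exp_log (Real.cosh_pos θ)]

lemma integrable_cosh_pow_gaussianReal (n : ℕ) (v : NNReal) :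
    Integrable (fun θ => Real.cosh θ ^ n) (gaussianReal 0 v) := by
  have hcosh (θ : ℝ) :
      Real.cosh θ ^ n = (∑ s, Real.exp (θ * ∑ i : Fin n, pmVec s i)) / 2 ^ n := by
    simpa only [mgf, integral_uniformSpin, Fintype.card_fin] using
      (mgf_sum_uniformSpin (ι := Fin n) θ).symm
  simp only [hcosh]
  exact (integrable_finsetSum _ fun s _ => integrable_exp_mul_const_gaussianReal v _).div_const _

lemma integral_isingWeight_mul_uniformSpin (hβ : 0 ≤ β) (f : (Fin n → ℝ) → ℝ) :
    ∫ z, isingWeight β (QCW n) z * f z ∂uniformSpin (Fin n)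
      = Real.exp (-(β / 2 * (n / n))) * ∫ θ, Real.cosh θ ^ n * ∫ z, f z ∂spinMeasure (Fin n) θ
          ∂gaussianReal 0 (β / n).toNNReal := by
  have hspin (θ : ℝ) : Real.cosh θ ^ n * ∫ z, f z ∂spinMeasure (Fin n) θ
      = (∑ s, Real.exp (θ * ∑ i, pmVec s i) * f (pmVec s)) / 2 ^ n := by
    rw [integral_spinMeasure, Fintype.card_fin, mul_div_cancel₀ _ (by positivity),
      integral_uniformSpin, Fintype.card_fin]
  simp only [hspin]
  rw [integral_div, integral_finsetSum _ fun s _ =>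
    (integrable_exp_mul_const_gaussianReal _ _).mul_const _, integral_uniformSpin, Fintype.card_fin,
    ← mul_div_assoc, Finset.mul_sum]
  simp only [integral_mul_const, isingWeight_QCW hβ (pmVec_sq _), mul_assoc]

/-- The law of the field `θ` which mixes independent spins into the Curie–Weiss measure on `n`
spins: a centred Gaussian of variance `β / n`, reweighted by `cosh θ ^ n`. -/
def cwField (β : ℝ) (n : ℕ) : Measure ℝ :=
  (gaussianReal 0 (β / n).toNNReal).tilted fun θ => n * Real.log (Real.cosh θ)

instance : IsProbabilityMeasure (cwField β n) :=
  isProbabilityMeasure_tilted <| by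
    simpa only [exp_nat_mul_log_cosh] using integrable_cosh_pow_gaussianReal n _

lemma integral_cwField (g : ℝ → ℝ) :
    ∫ θ, g θ ∂cwField β n
      = (∫ θ, Real.cosh θ ^ n * g θ ∂gaussianReal 0 (β / n).toNNReal) /
          ∫ θ, Real.cosh θ ^ n ∂gaussianReal 0 (β / n).toNNReal := by
  rw [cwField, integral_tilted, ← integral_div]
  simp only [exp_nat_mul_log_cosh, smul_eq_mul, div_mul_eq_mul_div]

lemma integral_isingMeasure_QCW (hβ : 0 ≤ β) (f : (Fin n → ℝ) → ℝ) :
    ∫ z, f z ∂isingMeasure (Fin n) β (QCW n)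
      = ∫ θ, (∫ z, f z ∂spinMeasure (Fin n) θ) ∂cwField β n := by
  have hpartition := integral_isingWeight_mul_uniformSpin (n := n) hβ fun _ => 1
  simp only [mul_one, integral_const, probReal_univ, smul_eq_mul] at hpartition
  rw [integral_isingMeasure_eq_div_uniformSpin, hpartition,
    integral_isingWeight_mul_uniformSpin hβ, mul_div_mul_left _ _ (Real.exp_pos _).ne',
    integral_cwField]

lemma cwField_eq_tilted_cwFreeEnergy [NeZero n] (hβ : 0 < β) :
    cwField β n = (volume : Measure ℝ).tilted fun θ => n * cwFreeEnergy β θ := by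
  have hn : (0 : ℝ) < n := by
    have := NeZero.pos n
    positivity
  have hvar : 0 < β / n := by positivity
  have hexponent : (fun θ => n * cwFreeEnergy β θ)
      = (fun θ => -(θ - 0) ^ 2 / (2 * ((β / n).toNNReal : ℝ))) +
        fun θ => n * Real.log (Real.cosh θ) := by
    funext θ
    rw [Pi.add_apply, Real.coe_toNNReal _ hvar.le, cwFreeEnergy]
    field_simp
    ring
  rw [cwField, gaussianReal_eq_tilted 0 (Real.toNNReal_pos.2 hvar).ne', hexponent, tilted_tilted]
  refine not_imp_comm.1 tilted_of_not_integrable ?_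
  rw [← gaussianReal_eq_tilted 0 (Real.toNNReal_pos.2 hvar).ne']
  exact IsProbabilityMeasure.ne_zero _

lemma integrable_exp_nat_mul_cwFreeEnergy [NeZero n] (hβ : 0 < β) :
    Integrable fun θ => Real.exp (n * cwFreeEnergy β θ) := by
  -- Tilting by a non-integrable function yields the junk value `0`, not a probability measure.
  refine not_imp_comm.1 tilted_of_not_integrable ?_
  rw [← cwField_eq_tilted_cwFreeEnergy hβ]
  exact IsProbabilityMeasure.ne_zero _

-- Exhibits the field laws as tilts by `n Φ_β` of one fixed probability measure, the form to which
-- Laplace's method applies.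
lemma cwField_succ_eq_tilted_cwField_one (hβ : 0 < β) (n : ℕ) :
    cwField β (n + 1) = (cwField β 1).tilted fun θ => n * cwFreeEnergy β θ := by
  rw [cwField_eq_tilted_cwFreeEnergy hβ, cwField_eq_tilted_cwFreeEnergy hβ,
    tilted_tilted (integrable_exp_nat_mul_cwFreeEnergy hβ)]
  congr 1
  funext θ
  rw [Pi.add_apply]
  push_cast
  ring

lemma isOpenPosMeasure_cwField [NeZero n] (hβ : 0 < β) : (cwField β n).IsOpenPosMeasure := by
  rw [cwField_eq_tilted_cwFreeEnergy hβ]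
  exact (absolutelyContinuous_tilted (integrable_exp_nat_mul_cwFreeEnergy hβ)).isOpenPosMeasure

/-- The mean deviation `E|tanh² θ - m(β)²|`, under the mixing field, of the squared conditional
mean of a spin from its limit. -/
def cwDeviation (β : ℝ) (n : ℕ) : ℝ :=
  ∫ θ, |Real.tanh θ ^ 2 - isingMag β ^ 2| ∂cwField β n

lemma abs_tanh_sq_sub_isingMag_sq_le_one (β θ : ℝ) : |Real.tanh θ ^ 2 - isingMag β ^ 2| ≤ 1 :=
  abs_sub_le_of_nonneg_of_le (sq_nonneg _) (Real.tanh_sq_lt_one θ).le (sq_nonneg _)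
    (isingMag_sq_mem_Icc β).2

lemma integrable_abs_tanh_sq_sub_isingMag_sq :
    Integrable (fun θ => |Real.tanh θ ^ 2 - isingMag β ^ 2|) (cwField β n) :=
  Integrable.of_bound (by fun_prop) 1 <| ae_of_all _ fun θ => by
    simpa only [Real.norm_eq_abs, abs_abs] using abs_tanh_sq_sub_isingMag_sq_le_one β θ

lemma tendsto_cwDeviation (hβ : 0 ≤ β) : Tendsto (cwDeviation β) atTop (𝓝 0) := by
  unfold cwDeviation
  rcases hβ.eq_or_lt with rfl | hβ
  · simp [integral_cwField, isingMag_zero]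
  obtain ⟨θ₀, hmax⟩ := (cwFreeEnergy.continuous β).exists_forall_ge
    (cwFreeEnergy.tendsto_cocompact_atBot hβ)
  rw [← tendsto_add_atTop_iff_nat 1]
  refine tendsto_integral_zero_of_tendsto_measureReal (by fun_prop) (fun θ => abs_nonneg _)
    (abs_tanh_sq_sub_isingMag_sq_le_one β) fun ε hε => ?_
  obtain ⟨δ, hδ, hgap⟩ := cwFreeEnergy.exists_forall_le_sub hβ hmax hε
  have := isOpenPosMeasure_cwField (n := 1) hβ
  have hnear : cwField β 1 {θ | cwFreeEnergy β θ₀ - δ / 2 < cwFreeEnergy β θ} ≠ 0 :=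
    (isOpen_lt continuous_const (by fun_prop)).measure_ne_zero _ ⟨θ₀, sub_lt_self _ (half_pos hδ)⟩
  have hfar : MeasurableSet {θ | ε ≤ |Real.tanh θ ^ 2 - isingMag β ^ 2|} :=
    measurableSet_le measurable_const (by fun_prop)
  exact (tendsto_measureReal_tilted_nat_mul (by fun_prop) hmax hδ hnear hfar hgap).congr
    fun n => by rw [cwField_succ_eq_tilted_cwField_one hβ n]

lemma integral_abs_sampleMean_sq_sub_isingMag_sq_le [NeZero n] (hβ : 0 ≤ β) :
    ∫ x, |sampleMean x ^ 2 - isingMag β ^ 2| ∂isingMeasure (Fin n) β (QCW n)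
      ≤ 2 / √n + cwDeviation β n := by
  have hspin (θ : ℝ) : ∫ x, |sampleMean x ^ 2 - isingMag β ^ 2| ∂spinMeasure (Fin n) θ
      ≤ 2 / √n + |Real.tanh θ ^ 2 - isingMag β ^ 2| := by
    have hmean := integral_abs_sampleMean_sq_sub_tanh_sq_le (ι := Fin n) θ
    rw [Fintype.card_fin] at hmean
    calc ∫ x, |sampleMean x ^ 2 - isingMag β ^ 2| ∂spinMeasure (Fin n) θ
        ≤ ∫ x, |sampleMean x ^ 2 - Real.tanh θ ^ 2| + |Real.tanh θ ^ 2 - isingMag β ^ 2|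
            ∂spinMeasure (Fin n) θ :=
          integral_mono (integrable_spinMeasure _ _) (integrable_spinMeasure _ _)
            fun x => abs_sub_le _ _ _
      _ = ∫ x, |sampleMean x ^ 2 - Real.tanh θ ^ 2| ∂spinMeasure (Fin n) θ
            + |Real.tanh θ ^ 2 - isingMag β ^ 2| := by
          rw [integral_add (integrable_spinMeasure _ _) (integrable_const _), integral_const,
            probReal_univ, one_smul]
      _ ≤ 2 / √n + |Real.tanh θ ^ 2 - isingMag β ^ 2| := by gcongr
  rw [integral_isingMeasure_QCW hβ]
  calc ∫ θ, (∫ x, |sampleMean x ^ 2 - isingMag β ^ 2| ∂spinMeasure (Fin n) θ) ∂cwField β n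
      ≤ ∫ θ, 2 / √n + |Real.tanh θ ^ 2 - isingMag β ^ 2| ∂cwField β n :=
        integral_mono_of_nonneg (ae_of_all _ fun θ => integral_nonneg fun x => abs_nonneg _)
          ((integrable_const _).add integrable_abs_tanh_sq_sub_isingMag_sq) (ae_of_all _ hspin)
    _ = 2 / √n + cwDeviation β n := by
        rw [integral_add (integrable_const _) integrable_abs_tanh_sq_sub_isingMag_sq,
          integral_const, probReal_univ, one_smul, cwDeviation]

end CurieWeiss

section SampleCovariance

variable {ι : Type*} [Fintype ι]

lemma card_mul_sampleMean [Nonempty ι] (x : ι → ℝ) :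
    Fintype.card ι * sampleMean x = ∑ i, x i :=
  mul_div_cancel₀ _ (Nat.cast_ne_zero.2 Fintype.card_ne_zero)

lemma sum_sub_sampleMean [Nonempty ι] (x : ι → ℝ) : ∑ i, (x i - sampleMean x) = 0 := by
  simp [Finset.sum_sub_distrib, card_mul_sampleMean]

lemma sum_sub_sampleMean_sq [Nonempty ι] {x : ι → ℝ} (hx : ∀ i, x i ^ 2 = 1) :
    ∑ i, (x i - sampleMean x) ^ 2 = Fintype.card ι * (1 - sampleMean x ^ 2) := by
  have hsq (i : ι) : (x i - sampleMean x) ^ 2 = 1 + sampleMean x ^ 2 - 2 * sampleMean x * x i := by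
    linear_combination hx i
  simp only [hsq, Finset.sum_sub_distrib, ← Finset.mul_sum, ← card_mul_sampleMean x,
    Finset.sum_const, Finset.card_univ, nsmul_eq_mul]
  ring

lemma sampleCov_eq_sum_sub_sampleMean_mul [Nonempty ι] (x y : ι → ℝ) :
    sampleCov x y = (∑ i, (x i - sampleMean x) * y i) / Fintype.card ι := by
  have hcentre : ∑ i, (x i - sampleMean x) * sampleMean y = 0 := by
    rw [← Finset.sum_mul, sum_sub_sampleMean, zero_mul]
  simp only [sampleCov, mul_sub (_ - _)]
  rw [Finset.sum_sub_distrib, hcentre, sub_zero]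

lemma mul_sqrt_card_mul_sampleCov [Nonempty ι] (t : ℝ) (x y : ι → ℝ) :
    t * (√(Fintype.card ι) * sampleCov x y)
      = ∑ i, t / √(Fintype.card ι) * (x i - sampleMean x) * y i := by
  simp only [sampleCov_eq_sum_sub_sampleMean_mul, mul_assoc, ← Finset.mul_sum]
  rw [div_eq_mul_one_div t, ← Real.sqrt_div_self']
  ring

lemma abs_sum_log_cosh_add_sub_le (θ : ℝ) {a : ι → ℝ} (ha : ∑ i, a i = 0) :
    |∑ i, (Real.log (Real.cosh (θ + a i)) - Real.log (Real.cosh θ))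
      - (1 - Real.tanh θ ^ 2) * ((∑ i, a i ^ 2) / 2)| ≤ 2 * ∑ i, |a i| ^ 3 := by
  have hremainder : ∑ i, (Real.log (Real.cosh (θ + a i)) - Real.log (Real.cosh θ))
      - (1 - Real.tanh θ ^ 2) * ((∑ i, a i ^ 2) / 2)
      = ∑ i, (Real.log (Real.cosh (θ + a i)) - Real.log (Real.cosh θ) - Real.tanh θ * a i
        - (1 - Real.tanh θ ^ 2) * (a i ^ 2 / 2)) := by
    simp only [Finset.sum_sub_distrib, ← Finset.mul_sum, ← Finset.sum_div, ha, mul_zero, sub_zero]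
  rw [hremainder, Finset.mul_sum]
  exact (Finset.abs_sum_le_sum_abs _ _).trans
    (Finset.sum_le_sum fun i _ => abs_log_cosh_add_sub_taylor_le θ (a i))

variable [Nonempty ι] {x : ι → ℝ} (hx : ∀ i, x i ^ 2 = 1) (t θ : ℝ)

include hx

lemma sum_abs_mul_sub_sampleMean_pow_three_le :
    ∑ i, |t / √(Fintype.card ι) * (x i - sampleMean x)| ^ 3
      ≤ 8 * |t| ^ 3 / √(Fintype.card ι) := by
  set n := (Fintype.card ι : ℝ)
  have hn : 0 < √n := Real.sqrt_pos.2 (Nat.cast_pos.2 Fintype.card_pos)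
  have hterm (i : ι) : |t / √n * (x i - sampleMean x)| ^ 3 ≤ (|t| / √n * 2) ^ 3 := by
    have hcentred : |x i - sampleMean x| ≤ 2 := by
      linarith [abs_sub (x i) (sampleMean x), (sq_le_one_iff_abs_le_one _).1 (hx i).le,
        abs_sampleMean_le_one hx]
    rw [abs_mul, abs_div, abs_of_pos hn]
    gcongr
  calc ∑ i, |t / √n * (x i - sampleMean x)| ^ 3 ≤ n * (|t| / √n * 2) ^ 3 := by
        simpa using Finset.sum_le_card_nsmul Finset.univ _ _ fun i _ => hterm i
    _ = √n ^ 2 * (|t| / √n * 2) ^ 3 := by rw [Real.sq_sqrt (Nat.cast_nonneg _)]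
    _ = 8 * |t| ^ 3 / √n := by
        field_simp
        norm_num

lemma abs_sum_log_cosh_add_mul_sub_sampleMean_sub_le :
    |∑ i, (Real.log (Real.cosh (θ + t / √(Fintype.card ι) * (x i - sampleMean x)))
        - Real.log (Real.cosh θ))
      - t ^ 2 / 2 * ((1 - sampleMean x ^ 2) * (1 - Real.tanh θ ^ 2))|
      ≤ 16 * |t| ^ 3 / √(Fintype.card ι) := by
  have hn : (Fintype.card ι : ℝ) ≠ 0 := Nat.cast_ne_zero.2 Fintype.card_ne_zero
  have hsum : ∑ i, t / √(Fintype.card ι) * (x i - sampleMean x) = 0 := by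
    rw [← Finset.mul_sum, sum_sub_sampleMean, mul_zero]
  have hsum_sq : ∑ i, (t / √(Fintype.card ι) * (x i - sampleMean x)) ^ 2
      = t ^ 2 * (1 - sampleMean x ^ 2) := by
    simp only [mul_pow, ← Finset.mul_sum, sum_sub_sampleMean_sq hx, div_pow,
      Real.sq_sqrt (Nat.cast_nonneg _)]
    field_simp
  have htaylor := abs_sum_log_cosh_add_sub_le θ hsum
  have hmain : (1 - Real.tanh θ ^ 2) * (t ^ 2 * (1 - sampleMean x ^ 2) / 2)
      = t ^ 2 / 2 * ((1 - sampleMean x ^ 2) * (1 - Real.tanh θ ^ 2)) := by ring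
  rw [hsum_sq, hmain] at htaylor
  have hcube := sum_abs_mul_sub_sampleMean_pow_three_le hx t
  refine htaylor.trans ((mul_le_mul_of_nonneg_left hcube zero_le_two).trans_eq ?_)
  ring

end SampleCovariance

section MomentGeneratingFunction

lemma abs_integral_exp_sampleCov_spinMeasure_sub_le {ι : Type*} [Fintype ι] [DecidableEq ι]
    [Nonempty ι] {x : ι → ℝ} (hx : ∀ i, x i ^ 2 = 1) (t θ : ℝ) {c d : ℝ} (hc : c ∈ Set.Icc 0 1)
    (hd : d ∈ Set.Icc 0 1) :
    |∫ y, Real.exp (t * (√(Fintype.card ι) * sampleCov x y)) ∂spinMeasure ι θ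
        - Real.exp (t ^ 2 / 2 * ((1 - c) * (1 - d)))|
      ≤ Real.exp (t ^ 2 / 2 + 16 * |t| ^ 3 / √(Fintype.card ι)) *
        (16 * |t| ^ 3 / √(Fintype.card ι)
          + t ^ 2 / 2 * (|sampleMean x ^ 2 - c| + |Real.tanh θ ^ 2 - d|)) := by
  have htanh : Real.tanh θ ^ 2 ∈ Set.Icc 0 1 := ⟨sq_nonneg _, (Real.tanh_sq_lt_one θ).le⟩
  have hprod {u v : ℝ} (hu : 0 ≤ u) (hv : v ∈ Set.Icc 0 1) : (1 - u) * (1 - v) ≤ 1 :=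
    mul_le_one₀ (sub_le_self 1 hu) (sub_nonneg.2 hv.2) (sub_le_self 1 hv.1)
  simp only [mul_sqrt_card_mul_sampleCov, integral_exp_sum_spinMeasure]
  refine (abs_exp_sub_exp_mul_le (by positivity)
    (abs_sum_log_cosh_add_mul_sub_sampleMean_sub_le hx t θ) (hprod (sq_nonneg _) htanh)
    (hprod hc.1 hd)).trans ?_
  gcongr
  exact abs_one_sub_mul_one_sub_sub_le htanh hc

variable {n : ℕ} [NeZero n] {β : ℝ}

lemma abs_integral_exp_sampleCov_isingMeasure_QCW_sub_le (hβ : 0 ≤ β) {x : Fin n → ℝ}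
    (hx : ∀ i, x i ^ 2 = 1) (t : ℝ) {c : ℝ} (hc : c ∈ Set.Icc 0 1) :
    |∫ y, Real.exp (t * (√n * sampleCov x y)) ∂isingMeasure (Fin n) β (QCW n)
        - Real.exp (t ^ 2 / 2 * ((1 - c) * (1 - isingMag β ^ 2)))|
      ≤ Real.exp (t ^ 2 / 2 + 16 * |t| ^ 3 / √n) *
        (16 * |t| ^ 3 / √n + t ^ 2 / 2 * (|sampleMean x ^ 2 - c| + cwDeviation β n)) := by
  have hspin (θ : ℝ) := abs_integral_exp_sampleCov_spinMeasure_sub_le hx t θ hc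
    (isingMag_sq_mem_Icc β)
  simp only [Fintype.card_fin] at hspin
  have hdev := integrable_abs_tanh_sq_sub_isingMag_sq (β := β) (n := n)
  rw [integral_isingMeasure_QCW hβ]
  refine (abs_integral_sub_le (continuous_integral_spinMeasure _).aestronglyMeasurable
    (by fun_prop) (ae_of_all _ hspin)).trans_eq ?_
  rw [integral_const_mul, integral_add (integrable_const _) (by fun_prop), integral_const_mul,
    integral_add (integrable_const _) hdev]
  simp only [integral_const, probReal_univ, one_smul, cwDeviation]

lemma abs_integral_exp_sampleCov_prod_sub_le {β₁ β₂ : ℝ} (hβ₁ : 0 ≤ β₁) (hβ₂ : 0 ≤ β₂) (t : ℝ) :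
    |∫ p, Real.exp (t * (√n * sampleCov p.1 p.2))
          ∂(isingMeasure (Fin n) β₁ (QCW n)).prod (isingMeasure (Fin n) β₂ (QCW n))
        - Real.exp (t ^ 2 / 2 * ((1 - isingMag β₁ ^ 2) * (1 - isingMag β₂ ^ 2)))|
      ≤ Real.exp (t ^ 2 / 2 + 16 * |t| ^ 3 / √n) *
        (16 * |t| ^ 3 / √n
          + t ^ 2 / 2 * (2 / √n + cwDeviation β₁ n + cwDeviation β₂ n)) := by
  have hmeas : Measurable fun p : (Fin n → ℝ) × (Fin n → ℝ) =>
      Real.exp (t * (√n * sampleCov p.1 p.2)) := by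
    unfold sampleCov sampleMean
    fun_prop
  have hcond : ∀ᵐ x ∂isingMeasure (Fin n) β₁ (QCW n), _ :=
    (ae_isingMeasure_sq_eq_one β₁ (QCW n)).mono fun x hx =>
      abs_integral_exp_sampleCov_isingMeasure_QCW_sub_le hβ₂ hx t (isingMag_sq_mem_Icc β₁)
  rw [integral_prod_isingMeasure _ _ _ _ hmeas]
  refine (abs_integral_sub_le (integrable_isingMeasure _ _ _).aestronglyMeasurable
    (integrable_isingMeasure _ _ _) hcond).trans ?_
  rw [integral_const_mul, integral_add (integrable_const _) (integrable_isingMeasure _ _ _),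
    integral_const_mul, integral_add (integrable_isingMeasure _ _ _) (integrable_const _)]
  simp only [integral_const, probReal_univ, one_smul]
  gcongr
  exact integral_abs_sampleMean_sq_sub_isingMag_sq_le hβ₁

end MomentGeneratingFunction

/-- **(Curie–Weiss, convergence of the moment generating function of `√n Tₙ`).**
If `X ~ P_{β₁,Q^{CW}}` and `Y ~ P_{β₂,Q^{CW}}` are independent, then for every `t ∈ ℝ`,
`E[exp(t √n Tₙ)] → exp(t² (1-m(β₁)²)(1-m(β₂)²) / 2)`. -/
theorem curieWeiss_mgf_convergence (β₁ β₂ : ℝ) (hβ₁ : 0 ≤ β₁) (hβ₂ : 0 ≤ β₂) (t : ℝ) :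
    Tendsto
      (fun n => ∫ p : (Fin n → ℝ) × (Fin n → ℝ),
          Real.exp (t * (Real.sqrt n * sampleCov p.1 p.2))
          ∂((isingMeasure (Fin n) β₁ (QCW n)).prod (isingMeasure (Fin n) β₂ (QCW n))))
      atTop
      (𝓝 (Real.exp (t ^ 2 * (1 - isingMag β₁ ^ 2) * (1 - isingMag β₂ ^ 2) / 2))) := by
  have hsqrt : Tendsto (fun n : ℕ => √(n : ℝ)) atTop atTop :=
    Real.tendsto_sqrt_atTop.comp tendsto_natCast_atTop_atTop
  have hremainder := hsqrt.const_div_atTop (16 * |t| ^ 3)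
  have hdeviation := ((hsqrt.const_div_atTop 2).add (tendsto_cwDeviation hβ₁)).add
    (tendsto_cwDeviation hβ₂)
  have hbound := ((Real.continuous_exp.tendsto _).comp (hremainder.const_add (t ^ 2 / 2))).mul
    (hremainder.add (hdeviation.const_mul (t ^ 2 / 2)))
  simp only [add_zero, mul_zero] at hbound
  have hlimit : t ^ 2 * (1 - isingMag β₁ ^ 2) * (1 - isingMag β₂ ^ 2) / 2
      = t ^ 2 / 2 * ((1 - isingMag β₁ ^ 2) * (1 - isingMag β₂ ^ 2)) := by ring
  rw [hlimit, tendsto_iff_dist_tendsto_zero]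
  refine squeeze_zero' (Eventually.of_forall fun n => dist_nonneg) ?_ hbound
  filter_upwards [eventually_ne_atTop 0] with n hn
  have : NeZero n := ⟨hn⟩
  exact abs_integral_exp_sampleCov_prod_sub_le hβ₁ hβ₂ t

end
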